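/- arXiv:2003.12706 — 2 statements merged into one kernel-verified Lean document; each statement's English description precedes it below -/
import Mathlib

section
/- For |q|<1, with R(q) = (q; q^5)_∞ (q^4; q^5)_∞ / ((q^2; q^5)_∞ (q^3; q^5)_∞) and k = q·R(q)·R(q^2)^2, one has R(q)^2 / R(q^2) = (1 − k)/(1 + k). -/
/-!
Write `[i] = (q^i; q^10)_∞ (q^(10-i); q^10)_∞`. Splitting base-`q^5` products into base-`q^10`
ones gives `R(q) = [1][4] / ([2][3])` and `R(q^2) = [2] / [4]`, so `k = q [1][2] / ([3][4])`.
The result then follows from two product formulas, which evaluate `1 - k` and `1 + k`: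

* `[2][3] ([3][4] - q [1][2]) = [1] [4]^2 [5]` (`bracket_identity_sub`);
* `[1][4] ([3][4] + q [1][2]) = [2]^2 [3] [5]` (`bracket_identity_add`).

In particular `1 + k` is nonzero, since no `[i]` with `1 ≤ i ≤ 5` vanishes.

Both formulas are cases of Weierstrass's three-term relation for theta functions, obtained as
follows. By the Jacobi triple product (`triple_product`), `[i]` is a constant times the theta series
`θ(q^i)` with `θ(z) = ∑ (-1)^n z^n p^(n^2-n)`, `p = q^5`. Separating the double series for
`θ(xy) θ(x/y)` by the parity of `m + n` gives
`θ(xy) θ(x/y) = x (b(x) a(y) - a(x) b(y))` (`theta_mul_theta`), so such products are, up to a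
monomial, the `2 × 2` minors of a two-row matrix, and the three-term relation is the Plücker
relation between these minors (`plucker`).
-/


noncomputable def qp (a q : ℂ) : ℂ := ∏' k : ℕ, (1 - a * q ^ k)

noncomputable def GG (q : ℂ) : ℂ := 1 / (qp q (q ^ 5) * qp (q ^ 4) (q ^ 5))

noncomputable def HH (q : ℂ) : ℂ := 1 / (qp (q ^ 2) (q ^ 5) * qp (q ^ 3) (q ^ 5))

noncomputable def RR (q : ℂ) : ℂ :=
  (qp q (q ^ 5) * qp (q ^ 4) (q ^ 5)) / (qp (q ^ 2) (q ^ 5) * qp (q ^ 3) (q ^ 5))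

noncomputable def phi (q : ℂ) : ℂ := ∑' n : ℤ, q ^ (n.natAbs ^ 2)

noncomputable def psi (q : ℂ) : ℂ := ∑' n : ℕ, q ^ (n * (n + 1) / 2)

open Filter Topology

/-! ### The Jacobi triple product -/

/-- The finite product `(Q; Q)_n = ∏_{k=1}^n (1 - Q^k)`. -/
noncomputable def qfac (Q : ℂ) (n : ℕ) : ℂ := ∏ k ∈ Finset.range n, (1 - Q ^ (k + 1))

/-- The reciprocal `1 / (Q; Q)_n`, extended by `0` to negative `n`. With this convention the
recursion `qfacInv_sub_one` holds for every integer `n`, so that truncated bilateral sums can be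
handled as sums over all of `ℤ`. -/
noncomputable def qfacInv (Q : ℂ) (n : ℤ) : ℂ := if n < 0 then 0 else (qfac Q n.toNat)⁻¹

/-- The general term `(-1)^n z^n p^(n^2-n)` of the theta series with base `Q = p^2`; passing to
`p` avoids halving the exponent `n(n-1)/2` of `Q`. -/
noncomputable def thetaTerm (p z : ℂ) (n : ℤ) : ℂ := (-1) ^ n * z ^ n * p ^ (n ^ 2 - n)

/-- The theta series `∑ (-1)^n z^n p^(n^2-n)` over all integers `n`. -/
noncomputable def theta (p z : ℂ) : ℂ := ∑' n : ℤ, thetaTerm p z n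

lemma one_sub_pow_ne_zero {Q : ℂ} (hQ : ‖Q‖ < 1) (n : ℕ) : 1 - Q ^ (n + 1) ≠ 0 := by
  intro h
  have h1 : Q ^ (n + 1) = 1 := (sub_eq_zero.mp h).symm
  have h2 : ‖Q‖ ^ (n + 1) < 1 := pow_lt_one₀ (norm_nonneg _) hQ (by omega)
  rw [← norm_pow, h1, norm_one] at h2
  exact lt_irrefl _ h2

lemma qfac_ne_zero {Q : ℂ} (hQ : ‖Q‖ < 1) (n : ℕ) : qfac Q n ≠ 0 :=
  Finset.prod_ne_zero_iff.mpr fun k _ => one_sub_pow_ne_zero hQ k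

lemma qfacInv_sub_one {Q : ℂ} (hQ : ‖Q‖ < 1) (n : ℤ) :
    qfacInv Q (n - 1) = (1 - Q ^ n) * qfacInv Q n := by
  rcases lt_trichotomy n 0 with h | h | h
  · simp [qfacInv, h, show n - 1 < 0 by omega]
  · subst h; simp [qfacInv]
  · obtain ⟨m, rfl⟩ : ∃ m : ℕ, n = (m : ℤ) + 1 := ⟨(n - 1).toNat, by omega⟩
    have h1 : ¬ ((m : ℤ) < 0) := by omega
    have h2 : ¬ ((m : ℤ) + 1 < 0) := by omega
    have h3 : ((m : ℤ) + 1).toNat = m + 1 := by omega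
    simp only [qfacInv, add_sub_cancel_right, h1, h2, h3, if_false, Int.toNat_natCast]
    have h4 := one_sub_pow_ne_zero hQ m
    have h5 := qfac_ne_zero hQ m
    have h6 : qfac Q (m + 1) = qfac Q m * (1 - Q ^ (m + 1)) := by
      simp [qfac, Finset.prod_range_succ]
    have h7 : Q ^ ((m : ℤ) + 1) = Q ^ (m + 1) := by
      exact_mod_cast zpow_natCast Q (m + 1)
    rw [h6, h7]
    field_simp

lemma multipliable_qp {Q : ℂ} (hQ : ‖Q‖ < 1) (a : ℂ) :
    Multipliable fun k : ℕ => (1 - a * Q ^ k) := by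
  have := multipliable_one_add_of_summable (f := fun k : ℕ => -(a * Q ^ k)) (by
    simpa [norm_mul] using (summable_geometric_of_lt_one (norm_nonneg Q) hQ).mul_left ‖a‖)
  simpa [sub_eq_add_neg] using this

lemma qp_ne_zero {Q a : ℂ} (hQ : ‖Q‖ < 1) (ha : ‖a‖ < 1) : qp a Q ≠ 0 := by
  have := tprod_one_add_ne_zero_of_summable (f := fun k : ℕ => -(a * Q ^ k)) (by
    intro k h
    have h1 : a * Q ^ k = 1 := by linear_combination -h
    have h2 : ‖a * Q ^ k‖ < 1 := by
      rw [norm_mul, norm_pow]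
      exact mul_lt_one_of_nonneg_of_lt_one_left (norm_nonneg _) ha
        (pow_le_one₀ (norm_nonneg _) hQ.le)
    rw [h1, norm_one] at h2
    exact lt_irrefl _ h2) (by
    simpa [norm_mul] using (summable_geometric_of_lt_one (norm_nonneg Q) hQ).mul_left ‖a‖)
  simpa [sub_eq_add_neg, qp] using this

lemma tendsto_qp {Q : ℂ} (hQ : ‖Q‖ < 1) (a : ℂ) :
    Tendsto (fun n => ∏ k ∈ Finset.range n, (1 - a * Q ^ k)) atTop (𝓝 (qp a Q)) :=
  (multipliable_qp hQ a).tendsto_prod_tprod_nat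

lemma tendsto_qfac {Q : ℂ} (hQ : ‖Q‖ < 1) : Tendsto (qfac Q) atTop (𝓝 (qp Q Q)) := by
  refine (tendsto_qp hQ Q).congr fun n => ?_
  simp [pow_succ', qfac]

/-- Writing `z` and `p` as exponentials turns the series into the two-variable Jacobi theta series,
whose parameter `τ` satisfies `Im τ = -log ‖p‖ / π > 0`. -/
lemma summable_gauss {p z : ℂ} (hp0 : p ≠ 0) (hp : ‖p‖ < 1) (hz : z ≠ 0) :
    Summable fun n : ℤ => z ^ n * p ^ (n ^ 2) := by
  have hpi : (Real.pi : ℂ) ≠ 0 := by exact_mod_cast Real.pi_ne_zero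
  have h := (summable_jacobiTheta₂_term_iff (Complex.log z / (2 * Real.pi * Complex.I))
    (Complex.log p / (Real.pi * Complex.I))).mpr (by
      have : Complex.log p / (Real.pi * Complex.I)
          = ((1 / Real.pi : ℝ) : ℂ) * (-(Complex.log p * Complex.I)) := by
        have := Complex.I_sq
        push_cast
        field_simp
        rw [this]; ring
      rw [this, Complex.im_ofReal_mul]
      have h2 : Real.log ‖p‖ < 0 := Real.log_neg (norm_pos_iff.mpr hp0) hp
      simp only [Complex.neg_im, Complex.mul_im, Complex.I_re, Complex.I_im, Complex.log_re]
      have := Real.pi_pos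
      have h3 : 0 < 1 / Real.pi := by positivity
      nlinarith)
  refine h.congr fun n => ?_
  rw [jacobiTheta₂_term]
  conv_rhs => rw [← Complex.exp_log hz, ← Complex.exp_log hp0]
  rw [← Complex.exp_int_mul, ← Complex.exp_int_mul, ← Complex.exp_add]
  congr 1
  push_cast
  have := Complex.I_ne_zero
  field_simp

lemma thetaTerm_eq {p : ℂ} (hp0 : p ≠ 0) (z : ℂ) (n : ℤ) :
    thetaTerm p z n = (-z / p) ^ n * p ^ (n ^ 2) := by
  have h : (-z) ^ n = (-1) ^ n * z ^ n := by rw [← mul_zpow, neg_one_mul]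
  rw [thetaTerm, zpow_sub₀ hp0, div_zpow, h]
  ring

lemma summable_thetaTerm {p z : ℂ} (hp0 : p ≠ 0) (hp : ‖p‖ < 1) (hz : z ≠ 0) :
    Summable (thetaTerm p z) :=
  (summable_gauss hp0 hp (div_ne_zero (neg_ne_zero.mpr hz) hp0)).congr
    fun n => (thetaTerm_eq hp0 z n).symm

lemma thetaTerm_sub_one {p z : ℂ} (hp0 : p ≠ 0) (hz : z ≠ 0) (n : ℤ) :
    -z * thetaTerm p z (n - 1) = thetaTerm p z n * (p ^ 2 / (p ^ 2) ^ n) := by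
  have h1 : p ^ ((n - 1) ^ 2 - (n - 1)) = p ^ (n ^ 2 - n) * (p ^ 2 / (p ^ 2) ^ n) := by
    rw [show (n - 1) ^ 2 - (n - 1) = (n ^ 2 - n) + (2 - 2 * n) by ring, zpow_add₀ hp0,
      zpow_sub₀ hp0 2, zpow_mul p 2 n]
    norm_cast
  have h2 : (-1 : ℂ) ≠ 0 := by norm_num
  rw [thetaTerm, thetaTerm, h1, zpow_sub_one₀ hz, zpow_sub_one₀ h2]
  field_simp

lemma thetaTerm_add_one {p z : ℂ} (hp0 : p ≠ 0) (hz : z ≠ 0) (n : ℤ) :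
    -z⁻¹ * thetaTerm p z (n + 1) = thetaTerm p z n * (p ^ 2) ^ n := by
  have h1 : p ^ ((n + 1) ^ 2 - (n + 1)) = p ^ (n ^ 2 - n) * (p ^ 2) ^ n := by
    rw [show (n + 1) ^ 2 - (n + 1) = (n ^ 2 - n) + 2 * n by ring, zpow_add₀ hp0,
      zpow_mul p 2 n]
    norm_cast
  have h2 : (-1 : ℂ) ≠ 0 := by norm_num
  rw [thetaTerm, thetaTerm, h1, zpow_add_one₀ hz, zpow_add_one₀ h2]
  field_simp

lemma hasSum_of_pointwise_eq {ι : Type*} {f g : ι → ℂ} {a : ℂ} (h : ∀ i, f i = g i)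
    (hg : HasSum g a) : HasSum f a := by
  rwa [funext h]

/-- The finite Jacobi triple product. The coefficient of `thetaTerm p z j` is the Gaussian binomial
coefficient `(2 * N choose N + j)` in base `p^2`, which vanishes for `|j| > N`. -/
lemma finite_triple {p z : ℂ} (hp0 : p ≠ 0) (hp : ‖p ^ 2‖ < 1) (hz : z ≠ 0) (N : ℕ) :
    HasSum (fun j : ℤ => qfac (p ^ 2) (2 * N) * qfacInv (p ^ 2) (N + j) *
        qfacInv (p ^ 2) (N - j) * thetaTerm p z j)
      ((∏ k ∈ Finset.range N, (1 - z * (p ^ 2) ^ k)) *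
        ∏ k ∈ Finset.range N, (1 - p ^ 2 / z * (p ^ 2) ^ k)) := by
  induction N with
  | zero =>
    convert hasSum_single (0 : ℤ) ?_ using 1
    · simp [qfac, qfacInv, thetaTerm]
    · intro j hj
      rcases lt_or_gt_of_ne hj with h | h
      · simp [qfacInv, h]
      · simp [qfacInv, h]
  | succ N ih =>
    set Q := p ^ 2 with hQdef
    have hQ0 : Q ≠ 0 := pow_ne_zero _ hp0
    have hm := ((Equiv.subRight (1 : ℤ)).hasSum_iff.mpr ih).mul_left (-z * Q ^ N)
    have hpl := ((Equiv.addRight (1 : ℤ)).hasSum_iff.mpr ih).mul_left (-z⁻¹ * Q ^ (N + 1))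
    have h0 := ih.mul_left (1 + Q ^ (2 * N + 1))
    have hval : (∏ k ∈ Finset.range (N + 1), (1 - z * Q ^ k)) *
        ∏ k ∈ Finset.range (N + 1), (1 - Q / z * Q ^ k) =
        (1 + Q ^ (2 * N + 1)) * ((∏ k ∈ Finset.range N, (1 - z * Q ^ k)) *
          ∏ k ∈ Finset.range N, (1 - Q / z * Q ^ k)) +
        -z * Q ^ N * ((∏ k ∈ Finset.range N, (1 - z * Q ^ k)) *
          ∏ k ∈ Finset.range N, (1 - Q / z * Q ^ k)) +
        -z⁻¹ * Q ^ (N + 1) * ((∏ k ∈ Finset.range N, (1 - z * Q ^ k)) *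
          ∏ k ∈ Finset.range N, (1 - Q / z * Q ^ k)) := by
      rw [Finset.prod_range_succ, Finset.prod_range_succ]
      field_simp
      ring
    rw [hval]
    refine hasSum_of_pointwise_eq (fun j => ?_) ((h0.add hm).add hpl)
    · simp only [Function.comp, Equiv.subRight_apply, Equiv.coe_addRight]
      have e1 := thetaTerm_sub_one hp0 hz j
      have e2 := thetaTerm_add_one hp0 hz j
      rw [← hQdef] at e1 e2
      have f1 := qfacInv_sub_one hp (N + 1 + j)
      have f2 := qfacInv_sub_one hp (N + j)
      have f3 := qfacInv_sub_one hp (N + 1 - j)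
      have f4 := qfacInv_sub_one hp (N - j)
      rw [show (N + 1 + j - 1 : ℤ) = N + j by ring] at f1
      rw [show (N + 1 - j - 1 : ℤ) = N - j by ring] at f3
      rw [show (2 * (N + 1)) = 2 * N + 1 + 1 by ring, qfac, Finset.prod_range_succ,
        Finset.prod_range_succ, ← qfac]
      rw [show (N + (j - 1) : ℤ) = N + j - 1 by ring, show (N - (j - 1) : ℤ) = N + 1 - j by ring,
        show (N + (j + 1) : ℤ) = N + 1 + j by ring, show (N - (j + 1) : ℤ) = N - j - 1 by ring]
      push_cast
      rw [f2, f4, f1, f3]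
      have g1 : Q ^ (N + j : ℤ) = Q ^ N * Q ^ j := by rw [zpow_add₀ hQ0, zpow_natCast]
      have g2 : Q ^ (N + 1 + j : ℤ) = Q ^ N * Q * Q ^ j := by
        rw [zpow_add₀ hQ0, zpow_add₀ hQ0, zpow_natCast, zpow_one]
      have g3 : Q ^ (N - j : ℤ) = Q ^ N / Q ^ j := by rw [zpow_sub₀ hQ0, zpow_natCast]
      have g4 : Q ^ (N + 1 - j : ℤ) = Q ^ N * Q / Q ^ j := by
        rw [zpow_sub₀ hQ0, zpow_add₀ hQ0, zpow_natCast, zpow_one]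
      rw [g1, g2, g3, g4]
      -- Once the neighbouring theta terms are expressed through the `j`-th one, what remains is a
      -- rational identity in `Q`, `Q ^ N` and `Q ^ j`: the rule of Pascal applied twice.
      have ht : Q ^ j ≠ 0 := zpow_ne_zero _ hQ0
      have e1' : thetaTerm p z (j - 1) = -z⁻¹ * (thetaTerm p z j * (Q / Q ^ j)) := by
        rw [← e1]; field_simp
      have e2' : thetaTerm p z (j + 1) = -z * (thetaTerm p z j * Q ^ j) := by
        rw [← e2]; field_simp
      rw [e1', e2']
      generalize Q ^ j = t at *
      field_simp
      ring

lemma tendsto_qfacInv {Q : ℂ} (hQ : ‖Q‖ < 1) {f : ℕ → ℤ} (hf : Tendsto f atTop atTop) :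
    Tendsto (fun N => qfacInv Q (f N)) atTop (𝓝 (qp Q Q)⁻¹) := by
  have h1 : Tendsto (fun N => (qfac Q (f N).toNat)⁻¹) atTop (𝓝 (qp Q Q)⁻¹) :=
    ((tendsto_qfac hQ).comp (tendsto_natCast_atTop_iff.mp
      (tendsto_atTop_mono (fun N => Int.self_le_toNat (f N)) hf))).inv₀ (qp_ne_zero hQ hQ)
  refine h1.congr' ?_
  filter_upwards [hf.eventually_ge_atTop 0] with N hN
  simp [qfacInv, not_lt.mpr hN]

lemma qfacInv_bound {Q : ℂ} (hQ : ‖Q‖ < 1) : ∃ C : ℝ, 0 ≤ C ∧ ∀ n, ‖qfacInv Q n‖ ≤ C := by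
  obtain ⟨C, hC⟩ := (Metric.isBounded_range_of_tendsto _
    ((tendsto_qfac hQ).inv₀ (qp_ne_zero hQ hQ))).exists_norm_le
  have hbound : ∀ n, ‖(qfac Q n)⁻¹‖ ≤ C := fun n => hC _ ⟨n, rfl⟩
  have h0 : 0 ≤ C := (norm_nonneg _).trans (hbound 0)
  refine ⟨C, h0, fun n => ?_⟩
  unfold qfacInv
  split_ifs
  · simpa using h0
  · exact hbound _

/-- The Jacobi triple product: let `N → ∞` in `finite_triple`, exchanging limit and sum by dominated
convergence, since the Gaussian binomials are bounded uniformly in `N` and `j`. -/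
theorem triple_product {p z : ℂ} (hp0 : p ≠ 0) (hp : ‖p‖ < 1) (hz : z ≠ 0) :
    qp z (p ^ 2) * qp (p ^ 2 / z) (p ^ 2) = (qp (p ^ 2) (p ^ 2))⁻¹ * theta p z := by
  have hQ : ‖p ^ 2‖ < 1 := by
    rw [norm_pow]; exact pow_lt_one₀ (norm_nonneg _) hp (by norm_num)
  obtain ⟨C, hC0, hC⟩ := qfacInv_bound hQ
  obtain ⟨B, hB⟩ := (Metric.isBounded_range_of_tendsto _ (tendsto_qfac hQ)).exists_norm_le
  have hB' : ∀ n, ‖qfac (p ^ 2) n‖ ≤ B := fun n => hB _ ⟨n, rfl⟩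
  have hB0 : 0 ≤ B := (norm_nonneg _).trans (hB' 0)
  have hlim := (tendsto_qp hQ z).mul (tendsto_qp hQ (p ^ 2 / z))
  have hdom := tendsto_tsum_of_dominated_convergence (𝓕 := atTop)
    (f := fun (N : ℕ) (j : ℤ) => qfac (p ^ 2) (2 * N) * qfacInv (p ^ 2) (N + j) *
        qfacInv (p ^ 2) (N - j) * thetaTerm p z j)
    (g := fun j => (qp (p ^ 2) (p ^ 2))⁻¹ * thetaTerm p z j)
    (bound := fun j => B * C * C * ‖thetaTerm p z j‖)
    ((summable_thetaTerm hp0 hp hz).norm.mul_left _)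
    (fun j => by
      have h2N : Tendsto (fun N : ℕ => 2 * N) atTop atTop :=
        tendsto_id.const_mul_atTop' (by norm_num)
      have hc : Tendsto (fun N : ℕ => (N : ℤ)) atTop atTop := tendsto_natCast_atTop_atTop
      have h := (((tendsto_qfac hQ).comp h2N).mul
        (tendsto_qfacInv hQ (tendsto_atTop_add_const_right _ j hc))).mul
        (tendsto_qfacInv hQ (tendsto_atTop_add_const_right _ (-j) hc))
      rw [mul_inv_cancel₀ (qp_ne_zero hQ hQ), one_mul] at h
      exact h.mul_const _)
    (Eventually.of_forall fun N j => by
      rw [norm_mul, norm_mul, norm_mul]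
      gcongr
      exacts [hB' _, hC _, hC _])
  have := tendsto_nhds_unique hlim (hdom.congr fun N => (finite_triple hp0 hQ hz N).tsum_eq)
  rw [this, tsum_mul_left, theta]

/-! ### Products of two theta series -/

/-- The general term `x^(2n) p^(2n^2)` of the series `a(x)`. -/
noncomputable def evenTerm (p x : ℂ) (n : ℤ) : ℂ := x ^ (2 * n) * p ^ (2 * n ^ 2)

/-- The general term `x^(2n+1) p^(2n^2+2n)` of the series `b(x)`. -/
noncomputable def oddTerm (p x : ℂ) (n : ℤ) : ℂ := x ^ (2 * n + 1) * p ^ (2 * n ^ 2 + 2 * n)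

lemma summable_evenTerm {p x : ℂ} (hp0 : p ≠ 0) (hp : ‖p‖ < 1) (hx : x ≠ 0) :
    Summable (evenTerm p x) := by
  have hQ : ‖p ^ 2‖ < 1 := by
    rw [norm_pow]; exact pow_lt_one₀ (norm_nonneg _) hp (by norm_num)
  refine (summable_gauss (pow_ne_zero 2 hp0) hQ (pow_ne_zero 2 hx)).congr fun n => ?_
  rw [evenTerm, zpow_mul, zpow_mul]
  norm_cast

lemma summable_oddTerm {p x : ℂ} (hp0 : p ≠ 0) (hp : ‖p‖ < 1) (hx : x ≠ 0) :
    Summable (oddTerm p x) := by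
  have hQ : ‖p ^ 2‖ < 1 := by
    rw [norm_pow]; exact pow_lt_one₀ (norm_nonneg _) hp (by norm_num)
  refine ((summable_gauss (pow_ne_zero 2 hp0) hQ
    (pow_ne_zero 2 (mul_ne_zero hx hp0))).mul_left x).congr fun n => ?_
  rw [oddTerm, zpow_add₀ hx, zpow_add₀ hp0, zpow_mul, zpow_mul, zpow_mul, zpow_one, mul_pow,
    mul_zpow]
  norm_cast
  ring

/-- The parametrisation of `ℤ × ℤ` by half the sum and half the difference of the coordinates
(rounded down): the left summand covers the pairs of even sum, the right summand those of odd
sum. -/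
def sumDiff : (ℤ × ℤ) ⊕ (ℤ × ℤ) → ℤ × ℤ
  | .inl (s, t) => (s + t, s - t)
  | .inr (s, t) => (s + t + 1, s - t)

lemma sumDiff_bijective : Function.Bijective sumDiff := by
  constructor
  · rintro (⟨a, b⟩ | ⟨a, b⟩) (⟨c, d⟩ | ⟨c, d⟩) h
    all_goals
      simp only [sumDiff, Prod.mk.injEq] at h
      obtain ⟨h1, h2⟩ := h
    · obtain rfl : a = c := by omega
      obtain rfl : b = d := by omega
      rfl
    · omega
    · omega
    · obtain rfl : a = c := by omega
      obtain rfl : b = d := by omega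
      rfl
  · rintro ⟨m, n⟩
    rcases Int.emod_two_eq_zero_or_one (m + n) with h | h
    · exact ⟨.inl ((m + n) / 2, (m - n) / 2), by simp only [sumDiff, Prod.mk.injEq]; omega⟩
    · exact ⟨.inr ((m + n - 1) / 2, (m - n - 1) / 2), by
        simp only [sumDiff, Prod.mk.injEq]; omega⟩

lemma hasSum_sumDiff {F : ℤ × ℤ → ℂ} {A B : ℂ}
    (hA : HasSum (fun i : ℤ × ℤ => F (i.1 + i.2, i.1 - i.2)) A)
    (hB : HasSum (fun i : ℤ × ℤ => F (i.1 + i.2 + 1, i.1 - i.2)) B) : HasSum F (A + B) := by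
  have h : HasSum (F ∘ sumDiff) (A + B) := HasSum.sum hA hB
  exact (Equiv.ofBijective _ sumDiff_bijective).hasSum_iff.mp h

/-- The series `a(x) = ∑ x^(2n) p^(2n^2)`. -/
noncomputable def evenSum (p x : ℂ) : ℂ := ∑' n : ℤ, evenTerm p x n

/-- The series `b(x) = ∑ x^(2n+1) p^(2n^2+2n)`. -/
noncomputable def oddSum (p x : ℂ) : ℂ := ∑' n : ℤ, oddTerm p x n

lemma thetaTerm_mul_even {p x y : ℂ} (hp0 : p ≠ 0) (hx : x ≠ 0) (hy : y ≠ 0) (s t : ℤ) :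
    thetaTerm p (x * y) (s + t) * thetaTerm p (x / y) (s - t) =
      x * (oddTerm p x (s - 1) * evenTerm p y t) := by
  have h1 : (-1 : ℂ) ^ (s + t) * (-1) ^ (s - t) = 1 := by
    rw [← zpow_add₀ (by norm_num), show s + t + (s - t) = 2 * s by ring, zpow_mul]
    norm_num
  have h2 : (x * y) ^ (s + t) * (x / y) ^ (s - t) = x * x ^ (2 * (s - 1) + 1) * y ^ (2 * t) := by
    rw [mul_zpow, div_zpow, ← zpow_one_add₀ hx, show 1 + (2 * (s - 1) + 1) = (s + t) + (s - t) by
      ring, show 2 * t = (s + t) - (s - t) by ring, zpow_add₀ hx (s + t) (s - t),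
      zpow_sub₀ hy (s + t) (s - t)]
    ring
  have h3 : p ^ ((s + t) ^ 2 - (s + t)) * p ^ ((s - t) ^ 2 - (s - t)) =
      p ^ (2 * (s - 1) ^ 2 + 2 * (s - 1)) * p ^ (2 * t ^ 2) := by
    rw [← zpow_add₀ hp0, ← zpow_add₀ hp0]
    congr 1
    ring
  simp only [thetaTerm, oddTerm, evenTerm]
  linear_combination (x * y) ^ (s + t) * (x / y) ^ (s - t) *
      (p ^ ((s + t) ^ 2 - (s + t)) * p ^ ((s - t) ^ 2 - (s - t))) * h1 +
    (p ^ ((s + t) ^ 2 - (s + t)) * p ^ ((s - t) ^ 2 - (s - t))) * h2 +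
    x * x ^ (2 * (s - 1) + 1) * y ^ (2 * t) * h3

lemma thetaTerm_mul_odd {p x y : ℂ} (hp0 : p ≠ 0) (hx : x ≠ 0) (hy : y ≠ 0) (s t : ℤ) :
    thetaTerm p (x * y) (s + t + 1) * thetaTerm p (x / y) (s - t) =
      -x * (evenTerm p x s * oddTerm p y t) := by
  have h1 : (-1 : ℂ) ^ (s + t + 1) * (-1) ^ (s - t) = -1 := by
    rw [← zpow_add₀ (by norm_num), show s + t + 1 + (s - t) = 2 * s + 1 by ring,
      zpow_add₀ (by norm_num), zpow_mul]
    norm_num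
  have h2 : (x * y) ^ (s + t + 1) * (x / y) ^ (s - t) = x * x ^ (2 * s) * y ^ (2 * t + 1) := by
    rw [mul_zpow, div_zpow, ← zpow_one_add₀ hx, show 1 + 2 * s = (s + t + 1) + (s - t) by
      ring, show 2 * t + 1 = (s + t + 1) - (s - t) by ring, zpow_add₀ hx (s + t + 1) (s - t),
      zpow_sub₀ hy (s + t + 1) (s - t)]
    ring
  have h3 : p ^ ((s + t + 1) ^ 2 - (s + t + 1)) * p ^ ((s - t) ^ 2 - (s - t)) =
      p ^ (2 * s ^ 2) * p ^ (2 * t ^ 2 + 2 * t) := by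
    rw [← zpow_add₀ hp0, ← zpow_add₀ hp0]
    congr 1
    ring
  simp only [thetaTerm, oddTerm, evenTerm]
  linear_combination (x * y) ^ (s + t + 1) * (x / y) ^ (s - t) *
      (p ^ ((s + t + 1) ^ 2 - (s + t + 1)) * p ^ ((s - t) ^ 2 - (s - t))) * h1 -
    (p ^ ((s + t + 1) ^ 2 - (s + t + 1)) * p ^ ((s - t) ^ 2 - (s - t))) * h2 -
    x * x ^ (2 * s) * y ^ (2 * t + 1) * h3

lemma hasSum_mul_prod {f g : ℤ → ℂ} {a b : ℂ} (hf : HasSum f a) (hg : HasSum g b) :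
    HasSum (fun i : ℤ × ℤ => f i.1 * g i.2) (a * b) :=
  hf.mul hg (summable_mul_of_summable_norm hf.summable.norm hg.summable.norm)

lemma hasSum_sub_one {f : ℤ → ℂ} {a : ℂ} (hf : HasSum f a) :
    HasSum (fun n => f (n - 1)) a := by
  have h : HasSum (f ∘ Equiv.subRight (1 : ℤ)) a := (Equiv.hasSum_iff _).mpr hf
  exact h

/-- A product `θ(xy) θ(x/y)` is, up to the factor `x`, an alternating form of rank two in `x` and
`y`: the pairs of even sum contribute `b(x) a(y)`, those of odd sum `-a(x) b(y)`. -/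
theorem theta_mul_theta {p x y : ℂ} (hp0 : p ≠ 0) (hp : ‖p‖ < 1) (hx : x ≠ 0) (hy : y ≠ 0) :
    theta p (x * y) * theta p (x / y) =
      x * (oddSum p x * evenSum p y - evenSum p x * oddSum p y) := by
  have sxy := summable_thetaTerm hp0 hp (mul_ne_zero hx hy)
  have sdiv := summable_thetaTerm hp0 hp (div_ne_zero hx hy)
  have hL : HasSum (fun i : ℤ × ℤ => thetaTerm p (x * y) i.1 * thetaTerm p (x / y) i.2)
      (theta p (x * y) * theta p (x / y)) := hasSum_mul_prod sxy.hasSum sdiv.hasSum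
  have hox : HasSum (fun n => oddTerm p x (n - 1)) (oddSum p x) :=
    hasSum_sub_one (summable_oddTerm hp0 hp hx).hasSum
  have hey : HasSum (evenTerm p y) (evenSum p y) := (summable_evenTerm hp0 hp hy).hasSum
  have hex : HasSum (evenTerm p x) (evenSum p x) := (summable_evenTerm hp0 hp hx).hasSum
  have hoy : HasSum (oddTerm p y) (oddSum p y) := (summable_oddTerm hp0 hp hy).hasSum
  have hR : HasSum (fun i : ℤ × ℤ => thetaTerm p (x * y) i.1 * thetaTerm p (x / y) i.2)
      (x * (oddSum p x * evenSum p y) + -x * (evenSum p x * oddSum p y)) := by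
    apply hasSum_sumDiff
    · exact hasSum_of_pointwise_eq (fun i => thetaTerm_mul_even hp0 hx hy i.1 i.2)
        ((hasSum_mul_prod hox hey).mul_left x)
    · exact hasSum_of_pointwise_eq (fun i => thetaTerm_mul_odd hp0 hx hy i.1 i.2)
        ((hasSum_mul_prod hex hoy).mul_left (-x))
  rw [hL.unique hR]
  ring

/-! ### Identities in base `q^10` -/

/-- The product `[i] = (q^i; q^10)_∞ (q^(10-i); q^10)_∞`, written through its theta series; it
agrees with the product by `qp_mul_qp`. -/
noncomputable def bracket (q : ℂ) (i : ℕ) : ℂ :=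
  (qp (q ^ 10) (q ^ 10))⁻¹ * theta (q ^ 5) (q ^ i)

/-- The `2 × 2` minor `b(q^i) a(q^j) - a(q^i) b(q^j)`, with `p = q^5`. -/
noncomputable def minor (q : ℂ) (i j : ℕ) : ℂ :=
  oddSum (q ^ 5) (q ^ i) * evenSum (q ^ 5) (q ^ j) -
    evenSum (q ^ 5) (q ^ i) * oddSum (q ^ 5) (q ^ j)

lemma norm_pow_lt {q : ℂ} (hq : ‖q‖ < 1) {n : ℕ} (hn : n ≠ 0) : ‖q ^ n‖ < 1 := by
  rw [norm_pow]; exact pow_lt_one₀ (norm_nonneg _) hq hn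

lemma qp_mul_qp {q : ℂ} (hq0 : q ≠ 0) (hq : ‖q‖ < 1) {i j : ℕ} (hij : i + j = 10) :
    qp (q ^ i) (q ^ 10) * qp (q ^ j) (q ^ 10) = bracket q i := by
  have h := triple_product (pow_ne_zero 5 hq0) (norm_pow_lt hq (n := 5) (by norm_num))
    (pow_ne_zero i hq0)
  have hdiv : (q ^ 5) ^ 2 / q ^ i = q ^ j := by
    rw [← pow_mul, show 5 * 2 = j + i by omega, pow_add]
    exact mul_div_cancel_right₀ _ (pow_ne_zero i hq0)
  rw [hdiv, ← pow_mul] at h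
  exact h

lemma bracket_symm {q : ℂ} (hq0 : q ≠ 0) (hq : ‖q‖ < 1) {i j : ℕ} (hij : i + j = 10) :
    bracket q i = bracket q j := by
  rw [← qp_mul_qp hq0 hq hij, ← qp_mul_qp hq0 hq (add_comm i j ▸ hij), mul_comm]

lemma bracket_ne_zero {q : ℂ} (hq0 : q ≠ 0) (hq : ‖q‖ < 1) {i j : ℕ} (hij : i + j = 10)
    (hi : i ≠ 0) (hj : j ≠ 0) : bracket q i ≠ 0 := by
  have h10 := norm_pow_lt hq (n := 10) (by norm_num)
  rw [← qp_mul_qp hq0 hq hij]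
  exact mul_ne_zero (qp_ne_zero h10 (norm_pow_lt hq hi)) (qp_ne_zero h10 (norm_pow_lt hq hj))

lemma bracket_mul {q : ℂ} (hq0 : q ≠ 0) (hq : ‖q‖ < 1) {i j m n : ℕ} (hm : i + j = m)
    (hn : j + n = i) :
    bracket q m * bracket q n = (qp (q ^ 10) (q ^ 10))⁻¹ ^ 2 * (q ^ i * minor q i j) := by
  have h := theta_mul_theta (pow_ne_zero 5 hq0) (norm_pow_lt hq (n := 5) (by norm_num))
    (pow_ne_zero i hq0) (pow_ne_zero j hq0)
  rw [← pow_add, hm, show q ^ i / q ^ j = q ^ n by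
    rw [← hn, pow_add]; have := pow_ne_zero j hq0; field_simp] at h
  rw [bracket, bracket, minor, ← h]
  ring

/-- The Plücker relation between the `2 × 2` minors of a matrix with two rows. -/
lemma plucker (q : ℂ) (a b c d : ℕ) :
    minor q a b * minor q c d - minor q a c * minor q b d + minor q a d * minor q b c = 0 := by
  simp only [minor]; ring

/-- The three-term relation at the exponents `4, 3, 2, 0`, which evaluates `1 - k`. -/
lemma bracket_identity_sub {q : ℂ} (hq0 : q ≠ 0) (hq : ‖q‖ < 1) :
    bracket q 2 * bracket q 3 *
        (bracket q 3 * bracket q 4 - q * (bracket q 1 * bracket q 2)) =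
      bracket q 1 * bracket q 4 ^ 2 * bracket q 5 := by
  have h1 := bracket_mul hq0 hq (i := 3) (j := 2) (m := 5) (n := 1) rfl rfl
  have h2 := bracket_mul hq0 hq (i := 4) (j := 0) (m := 4) (n := 4) rfl rfl
  have h3 := bracket_mul hq0 hq (i := 4) (j := 3) (m := 7) (n := 1) rfl rfl
  have h4 := bracket_mul hq0 hq (i := 2) (j := 0) (m := 2) (n := 2) rfl rfl
  have h5 := bracket_mul hq0 hq (i := 3) (j := 0) (m := 3) (n := 3) rfl rfl
  have h6 := bracket_mul hq0 hq (i := 4) (j := 2) (m := 6) (n := 2) rfl rfl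
  rw [bracket_symm hq0 hq (i := 7) (j := 3) rfl] at h3
  rw [bracket_symm hq0 hq (i := 6) (j := 4) rfl] at h6
  have hP := plucker q 4 3 2 0
  set C := (qp (q ^ 10) (q ^ 10))⁻¹
  calc _ = (bracket q 3 * bracket q 3) * (bracket q 4 * bracket q 2)
        - q * ((bracket q 3 * bracket q 1) * (bracket q 2 * bracket q 2)) := by ring
    _ = (bracket q 5 * bracket q 1) * (bracket q 4 * bracket q 4) := by
      rw [h1, h2, h3, h4, h5, h6]
      linear_combination -C ^ 4 * q ^ 7 * hP
    _ = _ := by ring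

/-- The three-term relation at the exponents `4, 2, 1, 0`, which evaluates `1 + k`. -/
lemma bracket_identity_add {q : ℂ} (hq0 : q ≠ 0) (hq : ‖q‖ < 1) :
    bracket q 1 * bracket q 4 *
        (bracket q 3 * bracket q 4 + q * (bracket q 1 * bracket q 2)) =
      bracket q 2 ^ 2 * bracket q 3 * bracket q 5 := by
  have h1 := bracket_mul hq0 hq (i := 4) (j := 1) (m := 5) (n := 3) rfl rfl
  have h2 := bracket_mul hq0 hq (i := 2) (j := 0) (m := 2) (n := 2) rfl rfl
  have h3 := bracket_mul hq0 hq (i := 4) (j := 2) (m := 6) (n := 2) rfl rfl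
  have h4 := bracket_mul hq0 hq (i := 1) (j := 0) (m := 1) (n := 1) rfl rfl
  have h5 := bracket_mul hq0 hq (i := 4) (j := 0) (m := 4) (n := 4) rfl rfl
  have h6 := bracket_mul hq0 hq (i := 2) (j := 1) (m := 3) (n := 1) rfl rfl
  rw [bracket_symm hq0 hq (i := 6) (j := 4) rfl] at h3
  have hP := plucker q 4 2 1 0
  set C := (qp (q ^ 10) (q ^ 10))⁻¹
  calc _ = (bracket q 4 * bracket q 4) * (bracket q 3 * bracket q 1)
        + q * ((bracket q 4 * bracket q 2) * (bracket q 1 * bracket q 1)) := by ring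
    _ = (bracket q 5 * bracket q 3) * (bracket q 2 * bracket q 2) := by
      rw [h1, h2, h3, h4, h5, h6]
      linear_combination C ^ 4 * q ^ 6 * hP
    _ = _ := by ring

/-! ### The Rogers–Ramanujan quotient -/

/-- Separation of the factors of even and odd index. -/
lemma qp_split {Q : ℂ} (hQ : ‖Q‖ < 1) (a : ℂ) :
    qp a Q = qp a (Q ^ 2) * qp (a * Q) (Q ^ 2) := by
  have hQ2 := norm_pow_lt hQ (n := 2) (by norm_num)
  have e1 : (fun k : ℕ => 1 - a * (Q ^ 2) ^ k) = fun k => 1 - a * Q ^ (2 * k) := by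
    funext k; rw [pow_mul]
  have e2 : (fun k : ℕ => 1 - a * Q * (Q ^ 2) ^ k) = fun k => 1 - a * Q ^ (2 * k + 1) := by
    funext k; rw [pow_add, pow_mul, pow_one]; ring
  have m1 := multipliable_qp hQ2 a
  have m2 := multipliable_qp hQ2 (a * Q)
  rw [e1] at m1
  rw [e2] at m2
  rw [qp, qp, qp, e1, e2]
  exact (tprod_even_mul_odd (f := fun k => 1 - a * Q ^ k) m1 m2).symm

/-- `R(q) = [1][4] / ([2][3])`. -/
lemma RR_eq {q : ℂ} (hq0 : q ≠ 0) (hq : ‖q‖ < 1) :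
    RR q = bracket q 1 * bracket q 4 / (bracket q 2 * bracket q 3) := by
  have h5 := norm_pow_lt hq (n := 5) (by norm_num)
  rw [RR, qp_split h5 q, qp_split h5 (q ^ 4), qp_split h5 (q ^ 2), qp_split h5 (q ^ 3)]
  rw [← qp_mul_qp hq0 hq (i := 1) (j := 9) rfl, ← qp_mul_qp hq0 hq (i := 4) (j := 6) rfl,
    ← qp_mul_qp hq0 hq (i := 2) (j := 8) rfl, ← qp_mul_qp hq0 hq (i := 3) (j := 7) rfl]
  simp only [← pow_add, ← pow_mul, ← pow_succ', pow_one]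
  norm_num only
  congr 1 <;> ring

/-- `R(q^2) = [2] / [4]`; the base of `R(q^2)` is already `q^10`. -/
lemma RR_sq_eq {q : ℂ} (hq0 : q ≠ 0) (hq : ‖q‖ < 1) :
    RR (q ^ 2) = bracket q 2 / bracket q 4 := by
  rw [RR, ← qp_mul_qp hq0 hq (i := 4) (j := 6) rfl, ← qp_mul_qp hq0 hq (i := 2) (j := 8) rfl]
  simp only [← pow_mul, Nat.reduceMul]

theorem stmt5 (q : ℂ) (hq : ‖q‖ < 1) :
    RR q ^ 2 / RR (q ^ 2) =
      (1 - q * RR q * RR (q ^ 2) ^ 2) / (1 + q * RR q * RR (q ^ 2) ^ 2) := by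
  -- At `q = 0` the theta series are unavailable, but every product equals `1`.
  rcases eq_or_ne q 0 with rfl | hq0
  · have h0 : qp 0 0 = 1 := by simp [qp]
    simp [RR, h0]
  rw [RR_eq hq0 hq, RR_sq_eq hq0 hq]
  have hsub := bracket_identity_sub hq0 hq
  have hadd := bracket_identity_add hq0 hq
  have n1 := bracket_ne_zero hq0 hq (i := 1) (j := 9) rfl (by norm_num) (by norm_num)
  have n2 := bracket_ne_zero hq0 hq (i := 2) (j := 8) rfl (by norm_num) (by norm_num)
  have n3 := bracket_ne_zero hq0 hq (i := 3) (j := 7) rfl (by norm_num) (by norm_num)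
  have n4 := bracket_ne_zero hq0 hq (i := 4) (j := 6) rfl (by norm_num) (by norm_num)
  have n5 := bracket_ne_zero hq0 hq (i := 5) (j := 5) rfl (by norm_num) (by norm_num)
  generalize bracket q 1 = t1 at *
  generalize bracket q 2 = t2 at *
  generalize bracket q 3 = t3 at *
  generalize bracket q 4 = t4 at *
  generalize bracket q 5 = t5 at *
  have hk : q * (t1 * t4 / (t2 * t3)) * (t2 / t4) ^ 2 = q * (t1 * t2) / (t3 * t4) := by
    field_simp
  have e1 : 1 - q * (t1 * t2) / (t3 * t4) = t1 * t4 * t5 / (t2 * t3 ^ 2) := by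
    field_simp
    linear_combination hsub
  have e2 : 1 + q * (t1 * t2) / (t3 * t4) = t2 ^ 2 * t5 / (t1 * t4 ^ 2) := by
    field_simp
    linear_combination hadd
  rw [hk, e1, e2]
  field_simp
end

section
/- For |q|<1, R(q^2)/R(q)^2 − R(q)^2/R(q^2) + 4 = 4·(q^2;q^2)_∞^3·(q^{10};q^{10})_∞ / ((q;q)_∞·(q^5;q^5)_∞^3), where R(q) = (q, q^4; q^5)_∞/(q^2, q^3; q^5)_∞. -/
open Filter Topology Finset

/-! ### Infinite `q`-shifted factorials -/

lemma qp_summable (a : ℂ) {b : ℂ} (hb : ‖b‖ < 1) : Summable fun k : ℕ => ‖-(a * b ^ k)‖ := by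
  simp only [norm_neg, norm_mul, norm_pow]
  exact (summable_geometric_of_lt_one (norm_nonneg b) hb).mul_left ‖a‖

lemma qp_tendsto (a : ℂ) {b : ℂ} (hb : ‖b‖ < 1) :
    Tendsto (fun n : ℕ => ∏ k ∈ range n, (1 - a * b ^ k)) atTop (𝓝 (qp a b)) := by
  have h := (multipliable_one_add_of_summable (qp_summable a hb)).tendsto_prod_tprod_nat
  simpa only [qp, ← sub_eq_add_neg] using h

lemma qp_ne_zero_s9 {a b : ℂ} (hb : ‖b‖ < 1) (h : ∀ k : ℕ, 1 - a * b ^ k ≠ 0) : qp a b ≠ 0 := by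
  have := tprod_one_add_ne_zero_of_summable (f := fun k : ℕ => -(a * b ^ k))
    (by simpa only [← sub_eq_add_neg] using h) (qp_summable a hb)
  simpa only [qp, ← sub_eq_add_neg] using this

lemma one_sub_ne_zero_of_norm {z : ℂ} (hz : ‖z‖ < 1) : 1 - z ≠ 0 := by
  intro h
  rw [← sub_eq_zero.mp h] at hz
  simp at hz

lemma qp_pow_ne_zero {q : ℂ} (hq : ‖q‖ < 1) {i m : ℕ} (hi : i ≠ 0) (hm : m ≠ 0) :
    qp (q ^ i) (q ^ m) ≠ 0 := by
  refine qp_ne_zero_s9 (by simpa using pow_lt_one₀ (norm_nonneg q) hq hm) fun k => ?_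
  refine one_sub_ne_zero_of_norm ?_
  rw [← pow_mul, ← pow_add, norm_pow]
  exact pow_lt_one₀ (norm_nonneg q) hq (by omega)

/-- Sorting the factors of `(a; b)_∞` by the residue of their index modulo `m`. -/
lemma qp_dissect (a : ℂ) {b : ℂ} (hb : ‖b‖ < 1) {m : ℕ} (hm : m ≠ 0) :
    qp a b = ∏ i ∈ range m, qp (a * b ^ i) (b ^ m) := by
  have hfin : ∀ N : ℕ, ∏ k ∈ range (m * N), (1 - a * b ^ k) =
      ∏ i ∈ range m, ∏ j ∈ range N, (1 - a * b ^ i * (b ^ m) ^ j) := by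
    intro N
    induction N with
    | zero => simp
    | succ N ih =>
      rw [Nat.mul_succ, prod_range_add, ih, ← prod_mul_distrib]
      refine prod_congr rfl fun i _ => ?_
      rw [prod_range_succ]
      ring
  have h1 := (qp_tendsto a hb).comp (tendsto_id.const_mul_atTop' (Nat.pos_of_ne_zero hm))
  have h2 : Tendsto (fun N : ℕ => ∏ i ∈ range m, ∏ j ∈ range N, (1 - a * b ^ i * (b ^ m) ^ j))
      atTop (𝓝 (∏ i ∈ range m, qp (a * b ^ i) (b ^ m))) :=
    tendsto_finsetProd _ fun i _ => qp_tendsto _ (by simpa using pow_lt_one₀ (norm_nonneg b) hb hm)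
  refine tendsto_nhds_unique h1 (h2.congr fun N => ?_)
  simp [hfin]

/-! ### The Jacobi triple product -/

/-- The `n`-th term `(-x)^n Q^{n(n-1)/2}` of the bilateral theta series in base `Q`. The integer
division by `2` is exact. -/
noncomputable def jt (Q x : ℂ) (n : ℤ) : ℂ := (-x) ^ n * Q ^ (n * (n - 1) / 2)

/-- The theta product `(x; Q)_∞ (Q/x; Q)_∞`, without the factor `(Q; Q)_∞`. -/
noncomputable def tht (Q x : ℂ) : ℂ := qp x Q * qp (Q / x) Q

/-- The reciprocal `1 / (Q; Q)_n` for an integer `n`, with value `0` at negative `n`: this is the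
convention under which `invPoch_sub_one` holds for every integer. -/
noncomputable def invPoch (Q : ℂ) (n : ℤ) : ℂ :=
  if n < 0 then 0 else (∏ j ∈ range n.toNat, (1 - Q * Q ^ j))⁻¹

lemma two_mul_tri (n : ℤ) : 2 * (n * (n - 1) / 2) = n * (n - 1) :=
  Int.mul_ediv_cancel' (Int.even_mul_pred_self n).two_dvd

lemma jt_ne_zero {Q x : ℂ} (hQ : Q ≠ 0) (hx : x ≠ 0) (n : ℤ) : jt Q x n ≠ 0 :=
  mul_ne_zero (zpow_ne_zero _ (neg_ne_zero.mpr hx)) (zpow_ne_zero _ hQ)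

lemma jt_add_one {Q x : ℂ} (hQ : Q ≠ 0) (hx : x ≠ 0) (n : ℤ) :
    jt Q x (n + 1) = -x * Q ^ n * jt Q x n := by
  have h : (n + 1) * (n + 1 - 1) / 2 = n + n * (n - 1) / 2 := by
    have h1 := two_mul_tri n
    have h2 := two_mul_tri (n + 1)
    linarith
  rw [jt, jt, h, zpow_add₀ hQ, zpow_add₀ (neg_ne_zero.mpr hx), zpow_one]
  ring

lemma one_sub_mul_pow_ne_zero {Q : ℂ} (hQ1 : ‖Q‖ < 1) (k : ℕ) : 1 - Q * Q ^ k ≠ 0 := by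
  refine one_sub_ne_zero_of_norm ?_
  rw [← pow_succ', norm_pow]
  exact pow_lt_one₀ (norm_nonneg Q) hQ1 (by omega)

lemma invPoch_sub_one {Q : ℂ} (hQ1 : ‖Q‖ < 1) (n : ℤ) :
    invPoch Q (n - 1) = (1 - Q ^ n) * invPoch Q n := by
  rcases lt_trichotomy n 0 with h | h | h
  · simp [invPoch, h, show n - 1 < 0 by omega]
  · simp [invPoch, h]
  · obtain ⟨k, rfl⟩ : ∃ k : ℕ, n = k + 1 := ⟨(n - 1).toNat, by omega⟩
    have h1 : ¬ ((k : ℤ) < 0) := by omega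
    have h2 : ¬ ((k : ℤ) + 1 < 0) := by omega
    have h3 : ((k : ℤ) + 1).toNat = k + 1 := by omega
    have h4 : Q ^ ((k : ℤ) + 1) = Q * Q ^ k := by
      rw [← pow_succ', ← zpow_natCast]; push_cast; rfl
    simp only [invPoch, add_sub_cancel_right, h1, h2, if_false, h3, h4, Int.toNat_natCast,
      prod_range_succ]
    have := one_sub_mul_pow_ne_zero hQ1 k
    rw [mul_inv, mul_comm _⁻¹ (1 - Q * Q ^ k)⁻¹, mul_inv_cancel_left₀ this]

/-- The terms of the finite triple product: the `Q`-binomial coefficient `[M+N, N+n]` times the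
theta term. -/
noncomputable def finTerm (Q x : ℂ) (M N : ℕ) (n : ℤ) : ℂ :=
  (∏ j ∈ range (M + N), (1 - Q * Q ^ j)) * invPoch Q (M - n) * invPoch Q (N + n) * jt Q x n

lemma finTerm_succ_left {Q x : ℂ} (hQ : Q ≠ 0) (hQ1 : ‖Q‖ < 1) (hx : x ≠ 0) (M N : ℕ) (n : ℤ) :
    finTerm Q x (M + 1) N n = finTerm Q x M N n + -(x * Q ^ M) * finTerm Q x M N (n - 1) := by
  have e1 := invPoch_sub_one hQ1 (M + 1 - n)
  have e2 := invPoch_sub_one hQ1 (N + n)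
  have e3 := jt_add_one hQ hx (n - 1)
  rw [sub_add_cancel] at e3
  have e4 : (M : ℤ) + 1 - n - 1 = M - n := by ring
  have e5 : (M : ℤ) - (n - 1) = M + 1 - n := by ring
  have e6 : (N : ℤ) + (n - 1) = N + n - 1 := by ring
  rw [e4] at e1
  have e7 : Q * Q ^ (M + N) = Q ^ ((M : ℤ) + 1 - n) * Q ^ ((N : ℤ) + n) := by
    rw [← zpow_add₀ hQ, ← pow_succ', ← zpow_natCast]; congr 1; push_cast; ring
  have e8 : Q ^ M = Q ^ ((M : ℤ) + 1 - n) * Q ^ (n - 1) := by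
    rw [← zpow_add₀ hQ, ← zpow_natCast]; congr 1; ring
  simp only [finTerm]
  rw [show M + 1 + N = M + N + 1 by ring, prod_range_succ, e7, e5, e6, e1, e2, e3, e8]
  push_cast
  ring

lemma finTerm_succ_right {Q x : ℂ} (hQ : Q ≠ 0) (hQ1 : ‖Q‖ < 1) (hx : x ≠ 0) (M N : ℕ) (n : ℤ) :
    finTerm Q x M (N + 1) n =
      finTerm Q x M N n + -(Q / x * Q ^ N) * finTerm Q x M N (n + 1) := by
  have e1 := invPoch_sub_one hQ1 (M - n)
  have e2 := invPoch_sub_one hQ1 (N + 1 + n)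
  have e3 := jt_add_one hQ hx n
  have e4 : (N : ℤ) + 1 + n - 1 = N + n := by ring
  have e5 : (M : ℤ) - (n + 1) = M - n - 1 := by ring
  have e6 : (N : ℤ) + (n + 1) = N + 1 + n := by ring
  rw [e4] at e2
  have e7 : Q * Q ^ (M + N) = Q ^ ((M : ℤ) - n) * Q ^ ((N : ℤ) + 1 + n) := by
    rw [← zpow_add₀ hQ, ← pow_succ', ← zpow_natCast]; congr 1; push_cast; ring
  have e8 : Q ^ ((N : ℤ) + 1 + n) = Q * Q ^ N * Q ^ n := by
    rw [zpow_add₀ hQ, zpow_add₀ hQ, zpow_one, zpow_natCast]; ring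
  simp only [finTerm]
  rw [show M + (N + 1) = M + N + 1 by ring, prod_range_succ, e7, e5, e6, e1, e3]
  push_cast
  rw [e2, e8]
  field_simp
  ring

lemma hasSum_finTerm {Q x : ℂ} (hQ : Q ≠ 0) (hQ1 : ‖Q‖ < 1) (hx : x ≠ 0) (M N : ℕ) :
    HasSum (finTerm Q x M N)
      ((∏ j ∈ range M, (1 - x * Q ^ j)) * ∏ j ∈ range N, (1 - Q / x * Q ^ j)) := by
  induction M with
  | zero =>
    induction N with
    | zero =>
      have h : finTerm Q x 0 0 0 = 1 := by simp [finTerm, invPoch, jt]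
      have := hasSum_single (f := finTerm Q x 0 0) 0 fun n hn => by
        rcases lt_or_gt_of_ne hn with h | h
        · simp [finTerm, invPoch, h]
        · simp [finTerm, invPoch, h]
      simpa [h] using this
    | succ N ih =>
      have h2 := (Equiv.addRight (1 : ℤ)).hasSum_iff.mpr ih
      have h3 := ih.add (h2.mul_left (-(Q / x * Q ^ N)))
      rw [prod_range_succ]
      convert h3 using 1
      · funext n
        exact finTerm_succ_right hQ hQ1 hx 0 N n
      · ring
  | succ M ih =>
    have h2 := (Equiv.subRight (1 : ℤ)).hasSum_iff.mpr ih
    have h3 := ih.add (h2.mul_left (-(x * Q ^ M)))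
    rw [prod_range_succ]
    convert h3 using 1
    · funext n
      exact finTerm_succ_left hQ hQ1 hx M N n
    · ring

lemma summable_jt {Q x : ℂ} (hQ : Q ≠ 0) (hQ1 : ‖Q‖ < 1) (hx : x ≠ 0) :
    Summable fun n => ‖jt Q x n‖ := by
  have hpow := tendsto_pow_atTop_nhds_zero_of_lt_one (norm_nonneg Q) hQ1
  refine Summable.of_nat_of_neg ?_ ?_
  · refine summable_of_ratio_test_tendsto_lt_one (l := 0) one_pos
      (.of_forall fun n => norm_ne_zero_iff.mpr (jt_ne_zero hQ hx _)) ?_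
    have : Tendsto (fun n : ℕ => ‖x‖ * ‖Q‖ ^ n) atTop (𝓝 0) := by
      simpa using hpow.const_mul ‖x‖
    refine this.congr fun n => ?_
    have hn := norm_ne_zero_iff.mpr (jt_ne_zero hQ hx n)
    push_cast
    rw [jt_add_one hQ hx]
    simp only [norm_norm, norm_mul, norm_neg, zpow_natCast, norm_pow]
    field_simp
  · refine summable_of_ratio_test_tendsto_lt_one (l := 0) one_pos
      (.of_forall fun n => norm_ne_zero_iff.mpr (jt_ne_zero hQ hx _)) ?_
    have : Tendsto (fun n : ℕ => ‖Q‖ / ‖x‖ * ‖Q‖ ^ n) atTop (𝓝 0) := by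
      simpa using hpow.const_mul (‖Q‖ / ‖x‖)
    refine this.congr fun n => ?_
    have h := jt_add_one hQ hx (-((n + 1 : ℕ) : ℤ))
    rw [show -((n + 1 : ℕ) : ℤ) + 1 = -(n : ℤ) by push_cast; ring] at h
    have hn := norm_ne_zero_iff.mpr (jt_ne_zero hQ hx (-((n + 1 : ℕ) : ℤ)))
    rw [h]
    simp only [norm_norm, norm_mul, norm_neg, zpow_neg, zpow_natCast, norm_pow, norm_inv]
    have h1 := norm_ne_zero_iff.mpr hQ
    have h2 := norm_ne_zero_iff.mpr hx
    field_simp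
    ring

lemma tendsto_invPoch {Q : ℂ} (hQ1 : ‖Q‖ < 1) {u : ℕ → ℤ} (hu : Tendsto u atTop atTop) :
    Tendsto (fun N => invPoch Q (u N)) atTop (𝓝 (qp Q Q)⁻¹) := by
  have hE : qp Q Q ≠ 0 := qp_ne_zero_s9 hQ1 (one_sub_mul_pow_ne_zero hQ1)
  have h1 : Tendsto (fun N => (u N).toNat) atTop atTop := by
    refine tendsto_atTop.mpr fun b => ?_
    filter_upwards [hu.eventually_ge_atTop (b : ℤ)] with N hN
    omega
  have h2 := ((qp_tendsto Q hQ1).inv₀ hE).comp h1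
  refine h2.congr' ?_
  filter_upwards [hu.eventually_ge_atTop 0] with N hN
  simp [invPoch, hN]

lemma exists_bound_invPoch {Q : ℂ} (hQ1 : ‖Q‖ < 1) : ∃ C : ℝ, 0 ≤ C ∧ ∀ n, ‖invPoch Q n‖ ≤ C := by
  have h := (tendsto_invPoch hQ1 tendsto_natCast_atTop_atTop).norm.bddAbove_range
  obtain ⟨C, hC⟩ := h
  have hC' : ∀ N : ℕ, ‖invPoch Q N‖ ≤ C := fun N => hC ⟨N, rfl⟩
  have h0 : 0 ≤ C := (norm_nonneg _).trans (hC' 0)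
  refine ⟨C, h0, fun n => ?_⟩
  rcases lt_or_ge n 0 with h | h
  · simpa [invPoch, h] using h0
  · lift n to ℕ using h
    exact hC' n

/-- The Jacobi triple product identity, obtained from `hasSum_finTerm` with `M = N → ∞` by dominated
convergence. -/
lemma tsum_jt {Q x : ℂ} (hQ : Q ≠ 0) (hQ1 : ‖Q‖ < 1) (hx : x ≠ 0) :
    ∑' n, jt Q x n = qp Q Q * tht Q x := by
  have hE : qp Q Q ≠ 0 := qp_ne_zero_s9 hQ1 (one_sub_mul_pow_ne_zero hQ1)
  have hdbl : Tendsto (fun N : ℕ => N + N) atTop atTop :=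
    tendsto_atTop_mono (fun N => Nat.le_add_left N N) tendsto_id
  have hP := (qp_tendsto Q hQ1).comp hdbl
  obtain ⟨C, hC0, hC⟩ := exists_bound_invPoch hQ1
  obtain ⟨D, hD⟩ := hP.norm.bddAbove_range
  have hD' : ∀ N : ℕ, ‖∏ j ∈ range (N + N), (1 - Q * Q ^ j)‖ ≤ D := fun N => hD ⟨N, rfl⟩
  have hD0 : 0 ≤ D := (norm_nonneg _).trans (hD' 0)
  have hcast : Tendsto (fun N : ℕ => (N : ℤ)) atTop atTop := tendsto_natCast_atTop_atTop
  have hlim : Tendsto (fun N : ℕ => ∑' n, finTerm Q x N N n) atTop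
      (𝓝 (∑' n, (qp Q Q)⁻¹ * jt Q x n)) := by
    refine tendsto_tsum_of_dominated_convergence (bound := fun n => D * C * C * ‖jt Q x n‖)
      ((summable_jt hQ hQ1 hx).mul_left _) (fun n => ?_) (.of_forall fun N n => ?_)
    · have a1 := tendsto_invPoch hQ1 (tendsto_atTop_add_const_right _ (-n) hcast)
      have a2 := tendsto_invPoch hQ1 (tendsto_atTop_add_const_right _ n hcast)
      have a3 := ((hP.mul a1).mul a2).mul_const (jt Q x n)
      rw [mul_inv_cancel₀ hE, one_mul] at a3
      exact a3
    · simp only [finTerm, norm_mul]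
      gcongr
      · exact hD' N
      · exact hC _
      · exact hC _
  have hprod := (qp_tendsto x hQ1).mul (qp_tendsto (Q / x) hQ1)
  have h := tendsto_nhds_unique hlim
    (hprod.congr fun N => (hasSum_finTerm hQ hQ1 hx N N).tsum_eq.symm)
  rw [tsum_mul_left] at h
  rw [tht, ← h, mul_inv_cancel_left₀ hE]

/-! ### Weierstrass' three-term relation -/

lemma jt_mul_jt_even {Q x y : ℂ} (hQ : Q ≠ 0) (hx : x ≠ 0) (hy : y ≠ 0) (s t : ℤ) :
    jt Q (x * y) (s + t) * jt Q (x / y) (s - t) =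
      jt (Q ^ 2) (-x ^ 2) s * jt (Q ^ 2) (-(Q * y ^ 2)) t := by
  have h1 := two_mul_tri (s + t)
  have h2 := two_mul_tri (s - t)
  have h3 := two_mul_tri s
  have h4 := two_mul_tri t
  have hexp : (s + t) * (s + t - 1) / 2 + (s - t) * (s - t - 1) / 2 =
      2 * (s * (s - 1) / 2) + (t + 2 * (t * (t - 1) / 2)) := by linarith
  have hp : Q ^ ((s + t) * (s + t - 1) / 2) * Q ^ ((s - t) * (s - t - 1) / 2) =
      (Q ^ 2) ^ (s * (s - 1) / 2) * (Q ^ t * (Q ^ 2) ^ (t * (t - 1) / 2)) := by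
    rw [← zpow_add₀ hQ, hexp, zpow_add₀ hQ, zpow_add₀ hQ, zpow_mul, zpow_mul]
    rfl
  have hm : (-(x * y)) ^ (s + t) * (-(x / y)) ^ (s - t) = (x ^ 2) ^ s * (y ^ 2) ^ t := by
    have hxy : -(x * y) ≠ 0 := neg_ne_zero.mpr (mul_ne_zero hx hy)
    have hxy' : -(x / y) ≠ 0 := neg_ne_zero.mpr (div_ne_zero hx hy)
    rw [zpow_add₀ hxy, zpow_sub₀ hxy', mul_div_assoc', mul_right_comm, ← mul_zpow, mul_div_assoc,
      ← div_zpow]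
    congr 2 <;> field_simp
  simp only [jt, neg_neg]
  rw [mul_zpow Q]
  linear_combination Q ^ ((s + t) * (s + t - 1) / 2) * Q ^ ((s - t) * (s - t - 1) / 2) * hm +
    (x ^ 2) ^ s * (y ^ 2) ^ t * hp

lemma jt_mul_jt_odd {Q x y : ℂ} (hQ : Q ≠ 0) (hx : x ≠ 0) (hy : y ≠ 0) (s t : ℤ) :
    jt Q (x * y) (s + t) * jt Q (x / y) (s - t + 1) =
      -(x / y) * (jt (Q ^ 2) (-(Q * x ^ 2)) s * jt (Q ^ 2) (-y ^ 2) t) := by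
  rw [jt_add_one hQ (div_ne_zero hx hy), mul_left_comm, jt_mul_jt_even hQ hx hy]
  simp only [jt, neg_neg]
  rw [mul_zpow Q, mul_zpow Q, zpow_sub₀ hQ]
  field_simp

/-- The product `θ(xy) θ(x/y)` separates into a `2 × 2` determinant in functions of `x` and of `y`:
the double series is split according to the parity of the sum of the two indices. -/
lemma tht_mul_tht {Q x y : ℂ} (hQ : Q ≠ 0) (hQ1 : ‖Q‖ < 1) (hx : x ≠ 0) (hy : y ≠ 0) :
    qp Q Q ^ 2 * (tht Q (x * y) * tht Q (x / y)) =
      (∑' n, jt (Q ^ 2) (-x ^ 2) n) * (∑' n, jt (Q ^ 2) (-(Q * y ^ 2)) n) -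
      x / y * ((∑' n, jt (Q ^ 2) (-(Q * x ^ 2)) n) * ∑' n, jt (Q ^ 2) (-y ^ 2) n) := by
  have hprod : ∀ {R S a b : ℂ}, R ≠ 0 → ‖R‖ < 1 → S ≠ 0 → ‖S‖ < 1 → a ≠ 0 → b ≠ 0 →
      HasSum (fun p : ℤ × ℤ => jt R a p.1 * jt S b p.2) ((∑' n, jt R a n) * ∑' n, jt S b n) :=
    fun hR hR1 hS hS1 ha hb =>
      (summable_jt hR hR1 ha).of_norm.hasSum.mul (summable_jt hS hS1 hb).of_norm.hasSum
        (summable_mul_of_summable_norm (summable_jt hR hR1 ha) (summable_jt hS hS1 hb))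
  have hQ2 : Q ^ 2 ≠ 0 := pow_ne_zero 2 hQ
  have hQ21 : ‖Q ^ 2‖ < 1 := by simpa using pow_lt_one₀ (norm_nonneg Q) hQ1 two_ne_zero
  have hx2 : -x ^ 2 ≠ 0 := neg_ne_zero.mpr (pow_ne_zero 2 hx)
  have hy2 : -y ^ 2 ≠ 0 := neg_ne_zero.mpr (pow_ne_zero 2 hy)
  have hQx2 : -(Q * x ^ 2) ≠ 0 := neg_ne_zero.mpr (mul_ne_zero hQ (pow_ne_zero 2 hx))
  have hQy2 : -(Q * y ^ 2) ≠ 0 := neg_ne_zero.mpr (mul_ne_zero hQ (pow_ne_zero 2 hy))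
  have h := hprod hQ hQ1 hQ hQ1 (mul_ne_zero hx hy) (div_ne_zero hx hy)
  let g0 : ℤ × ℤ → ℤ × ℤ := fun p => (p.1 + p.2, p.1 - p.2)
  let g1 : ℤ × ℤ → ℤ × ℤ := fun p => (p.1 + p.2, p.1 - p.2 + 1)
  have hg0 : Function.Injective g0 := by
    rintro ⟨a, b⟩ ⟨c, d⟩ hh
    simp only [g0, Prod.mk.injEq] at hh ⊢
    omega
  have hg1 : Function.Injective g1 := by
    rintro ⟨a, b⟩ ⟨c, d⟩ hh
    simp only [g1, Prod.mk.injEq] at hh ⊢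
    omega
  have hc : IsCompl (Set.range g0) (Set.range g1) := by
    refine IsCompl.of_eq ?_ ?_
    · refine Set.eq_empty_of_forall_notMem ?_
      rintro _ ⟨⟨⟨a, b⟩, rfl⟩, ⟨c, d⟩, hh⟩
      simp only [g0, g1, Prod.mk.injEq] at hh
      omega
    · refine Set.eq_univ_of_forall ?_
      rintro ⟨m, n⟩
      rcases Int.even_or_odd (m + n) with ⟨s, hs⟩ | ⟨s, hs⟩
      · exact Or.inl ⟨(s, m - s), by simp only [g0, Prod.mk.injEq]; omega⟩
      · exact Or.inr ⟨(s, m - s), by simp only [g1, Prod.mk.injEq]; omega⟩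
  have k0 := hprod hQ2 hQ21 hQ2 hQ21 hx2 hQy2
  have k1 := (hprod hQ2 hQ21 hQ2 hQ21 hQx2 hy2).mul_left (-(x / y))
  have l0 : HasSum ((fun p : ℤ × ℤ => jt Q (x * y) p.1 * jt Q (x / y) p.2) ∘ g0) _ :=
    k0.congr_fun fun p => jt_mul_jt_even hQ hx hy p.1 p.2
  have l1 : HasSum ((fun p : ℤ × ℤ => jt Q (x * y) p.1 * jt Q (x / y) p.2) ∘ g1) _ :=
    k1.congr_fun fun p => jt_mul_jt_odd hQ hx hy p.1 p.2
  have key := h.unique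
    ((hg0.hasSum_range_iff.mpr l0).add_isCompl hc (hg1.hasSum_range_iff.mpr l1))
  rw [tsum_jt hQ hQ1 (mul_ne_zero hx hy), tsum_jt hQ hQ1 (div_ne_zero hx hy)] at key
  linear_combination key

/-- Weierstrass' addition formula for theta products: by `tht_mul_tht` it is the Plücker relation
between the `2 × 2` minors of a `2 × 4` matrix. -/
lemma tht_weierstrass {Q x y u v : ℂ} (hQ : Q ≠ 0) (hQ1 : ‖Q‖ < 1) (hx : x ≠ 0) (hy : y ≠ 0)
    (hu : u ≠ 0) (hv : v ≠ 0) :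
    tht Q (x * y) * tht Q (x / y) * (tht Q (u * v) * tht Q (u / v)) -
      tht Q (x * v) * tht Q (x / v) * (tht Q (u * y) * tht Q (u / y)) =
      u / y * (tht Q (y * v) * tht Q (y / v) * (tht Q (x * u) * tht Q (x / u))) := by
  have hE : qp Q Q ^ 4 ≠ 0 := pow_ne_zero 4 (qp_ne_zero_s9 hQ1 (one_sub_mul_pow_ne_zero hQ1))
  refine mul_left_cancel₀ hE ?_
  rw [show ∀ A B C D F G H I : ℂ, qp Q Q ^ 4 * (A * B * (C * D) - F * G * (H * I)) =
      (qp Q Q ^ 2 * (A * B)) * (qp Q Q ^ 2 * (C * D)) -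
      (qp Q Q ^ 2 * (F * G)) * (qp Q Q ^ 2 * (H * I)) by intros; ring,
    show ∀ r A B C D : ℂ, qp Q Q ^ 4 * (r * (A * B * (C * D))) =
      r * ((qp Q Q ^ 2 * (A * B)) * (qp Q Q ^ 2 * (C * D))) by intros; ring]
  rw [tht_mul_tht hQ hQ1 hx hy, tht_mul_tht hQ hQ1 hu hv, tht_mul_tht hQ hQ1 hx hv,
    tht_mul_tht hQ hQ1 hu hy, tht_mul_tht hQ hQ1 hy hv, tht_mul_tht hQ hQ1 hx hu]
  field_simp
  ring

/-! ### The identity in level ten -/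

/-- Weierstrass' formula at powers of `q`, with the exponents ordered so that truncated subtraction is
exact and every theta argument is a nonnegative power of `q`. -/
lemma tht_weierstrass_pow {q : ℂ} (hq0 : q ≠ 0) (hq : ‖q‖ < 1) {X U Y V : ℕ} (h1 : U ≤ X)
    (h2 : Y ≤ U) (h3 : V ≤ Y) :
    tht (q ^ 10) (q ^ (X + Y)) * tht (q ^ 10) (q ^ (X - Y)) *
        (tht (q ^ 10) (q ^ (U + V)) * tht (q ^ 10) (q ^ (U - V))) -
      tht (q ^ 10) (q ^ (X + V)) * tht (q ^ 10) (q ^ (X - V)) *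
        (tht (q ^ 10) (q ^ (U + Y)) * tht (q ^ 10) (q ^ (U - Y))) =
      q ^ (U - Y) * (tht (q ^ 10) (q ^ (Y + V)) * tht (q ^ 10) (q ^ (Y - V)) *
        (tht (q ^ 10) (q ^ (X + U)) * tht (q ^ 10) (q ^ (X - U)))) := by
  have hQ1 : ‖q ^ 10‖ < 1 := by simpa using pow_lt_one₀ (norm_nonneg q) hq (by norm_num)
  have h := tht_weierstrass (pow_ne_zero 10 hq0) hQ1 (pow_ne_zero X hq0) (pow_ne_zero Y hq0)
    (pow_ne_zero U hq0) (pow_ne_zero V hq0)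
  have hs : ∀ {a b : ℕ}, b ≤ a → q ^ (a - b) = q ^ a / q ^ b := fun hab => by
    rw [eq_div_iff (pow_ne_zero _ hq0), ← pow_add, Nat.sub_add_cancel hab]
  simpa only [pow_add, hs h1, hs h2, hs h3, hs (h2.trans h1), hs (h3.trans h2),
    hs ((h3.trans h2).trans h1)] using h

lemma tht_pow {q : ℂ} (hq0 : q ≠ 0) {n : ℕ} (hn : n ≤ 10) :
    tht (q ^ 10) (q ^ n) = qp (q ^ n) (q ^ 10) * qp (q ^ (10 - n)) (q ^ 10) := by
  have h : q ^ 10 / q ^ n = q ^ (10 - n) := by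
    rw [div_eq_iff (pow_ne_zero n hq0), ← pow_add, Nat.sub_add_cancel hn]
  rw [tht, h]

/-- The algebra behind the theorem. Here `a, b, c, d, e` are the values at `q, …, q^5` of the theta
product in base `q^10`; with `k = q a b / (c d)` the relations `h5` and `h7` factor `1 + k` and
`1 - k`, so that `b^3 c^2 / (a^2 d^3) = (1 + k) / (1 - k)`. -/
lemma level_ten_algebra {q a b c d e : ℂ} (ha : a ≠ 0) (hb : b ≠ 0) (hc : c ≠ 0) (hd : d ≠ 0)
    (he : e ≠ 0) (h5 : e * c * (b * b) - d * d * (c * a) = q * (a * a * (d * b)))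
    (h6 : d * d * (b * b) - e * e * (c * a) = q * (a * a * (c * c)))
    (h7 : d * b * (c * c) - d * d * (e * a) = q * (b * b * (c * a))) :
    b ^ 3 * c ^ 2 / (a ^ 2 * d ^ 3) - a ^ 2 * d ^ 3 / (b ^ 3 * c ^ 2) + 4 =
      4 * (b ^ 2 * d ^ 2) / (a * c * e ^ 2) := by
  set k := q * a * b / (c * d) with hk
  have hp : 1 + k = b ^ 2 * e / (a * d ^ 2) := by
    rw [hk]; field_simp; linear_combination -h5
  have hm : 1 - k = a * d * e / (b * c ^ 2) := by
    rw [hk]; field_simp; linear_combination h7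
  have hp0 : 1 + k ≠ 0 := by rw [hp]; positivity
  have hm0 : 1 - k ≠ 0 := by rw [hm]; positivity
  have hx : b ^ 3 * c ^ 2 / (a ^ 2 * d ^ 3) = (1 + k) / (1 - k) := by
    rw [hp, hm]; field_simp
  have hx' : a ^ 2 * d ^ 3 / (b ^ 3 * c ^ 2) = (1 - k) / (1 + k) := by
    rw [hp, hm]; field_simp
  have hk2 : k / ((1 + k) * (1 - k)) = q * a * c / e ^ 2 := by
    rw [hp, hm, hk]; field_simp
  have hdiff : (1 + k) / (1 - k) - (1 - k) / (1 + k) = 4 * (k / ((1 + k) * (1 - k))) := by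
    field_simp; ring
  rw [hx, hx', hdiff, hk2]
  field_simp
  linear_combination -h6

theorem stmt9 (q : ℂ) (hq : ‖q‖ < 1) :
    RR (q ^ 2) / RR q ^ 2 - RR q ^ 2 / RR (q ^ 2) + 4 =
      4 * qp (q ^ 2) (q ^ 2) ^ 3 * qp (q ^ 10) (q ^ 10) /
        (qp q q * qp (q ^ 5) (q ^ 5) ^ 3) := by
  rcases eq_or_ne q 0 with rfl | hq0
  · simp [RR, qp]
  have hn : ∀ {m : ℕ}, m ≠ 0 → ‖q ^ m‖ < 1 := fun hm => by
    simpa using pow_lt_one₀ (norm_nonneg q) hq hm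
  have h5 := tht_weierstrass_pow hq0 hq (X := 4) (U := 2) (Y := 1) (V := 0)
    (by norm_num) (by norm_num) (by norm_num)
  have h6 := tht_weierstrass_pow hq0 hq (X := 5) (U := 2) (Y := 1) (V := 0)
    (by norm_num) (by norm_num) (by norm_num)
  have h7 := tht_weierstrass_pow hq0 hq (X := 4) (U := 3) (Y := 2) (V := 0)
    (by norm_num) (by norm_num) (by norm_num)
  norm_num only at h5 h6 h7
  have t : ∀ n : ℕ, n ≤ 10 →
      tht (q ^ 10) (q ^ n) = qp (q ^ n) (q ^ 10) * qp (q ^ (10 - n)) (q ^ 10) :=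
    fun n hn => tht_pow hq0 hn
  have t1 := t 1 (by norm_num)
  have t2 := t 2 (by norm_num)
  have t3 := t 3 (by norm_num)
  have t4 := t 4 (by norm_num)
  have t5 := t 5 (by norm_num)
  have t6 : tht (q ^ 10) (q ^ 6) = tht (q ^ 10) (q ^ 4) := by
    rw [t 6 (by norm_num), t4, mul_comm]
  have t7 : tht (q ^ 10) (q ^ 7) = tht (q ^ 10) (q ^ 3) := by
    rw [t 7 (by norm_num), t3, mul_comm]
  rw [pow_one] at t1
  norm_num only at t1 t2 t3 t4 t5
  rw [t6, pow_one] at h5 h6 h7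
  rw [t7] at h6 h7
  have d5 : ∀ i : ℕ, qp (q ^ i) (q ^ 5) = qp (q ^ i) (q ^ 10) * qp (q ^ (i + 5)) (q ^ 10) :=
    fun i => by
      rw [qp_dissect (q ^ i) (hn (m := 5) (by norm_num)) (m := 2) (by norm_num)]
      simp [prod_range_succ, ← pow_mul, ← pow_add]
  have d2 : qp (q ^ 2) (q ^ 2) = qp (q ^ 2) (q ^ 10) * qp (q ^ 4) (q ^ 10) * qp (q ^ 6) (q ^ 10) *
      qp (q ^ 8) (q ^ 10) * qp (q ^ 10) (q ^ 10) := by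
    rw [qp_dissect (q ^ 2) (hn (m := 2) (by norm_num)) (m := 5) (by norm_num)]
    simp [prod_range_succ, ← pow_mul, ← pow_add]
  have d1 : qp q q = qp q (q ^ 2) * qp (q ^ 2) (q ^ 2) := by
    rw [qp_dissect q hq (m := 2) (by norm_num)]
    simp [prod_range_succ, ← pow_succ']
  have d1' : qp q (q ^ 2) = qp q (q ^ 10) * qp (q ^ 3) (q ^ 10) * qp (q ^ 5) (q ^ 10) *
      qp (q ^ 7) (q ^ 10) * qp (q ^ 9) (q ^ 10) := by
    rw [qp_dissect q (hn (m := 2) (by norm_num)) (m := 5) (by norm_num)]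
    simp [prod_range_succ, ← pow_mul, ← pow_succ']
  have d5' := d5 1
  rw [pow_one] at d5'
  have hne : ∀ i : ℕ, i ≠ 0 → qp (q ^ i) (q ^ 10) ≠ 0 := fun i hi =>
    qp_pow_ne_zero hq hi (by norm_num)
  have e1 : RR q = qp q (q ^ 10) * qp (q ^ 6) (q ^ 10) *
      (qp (q ^ 4) (q ^ 10) * qp (q ^ 9) (q ^ 10)) / (qp (q ^ 2) (q ^ 10) * qp (q ^ 7) (q ^ 10) *
      (qp (q ^ 3) (q ^ 10) * qp (q ^ 8) (q ^ 10))) := by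
    rw [RR, d5', d5 4, d5 2, d5 3]
  have e2 : RR (q ^ 2) = qp (q ^ 2) (q ^ 10) * qp (q ^ 8) (q ^ 10) /
      (qp (q ^ 4) (q ^ 10) * qp (q ^ 6) (q ^ 10)) := by
    simp only [RR, ← pow_mul]
  have p1 := hne 1 (by norm_num)
  rw [pow_one] at p1
  have p2 := hne 2 (by norm_num)
  have p3 := hne 3 (by norm_num)
  have p4 := hne 4 (by norm_num)
  have p5 := hne 5 (by norm_num)
  have p6 := hne 6 (by norm_num)
  have p7 := hne 7 (by norm_num)
  have p8 := hne 8 (by norm_num)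
  have p9 := hne 9 (by norm_num)
  have p10 := hne 10 (by norm_num)
  have key := level_ten_algebra (by rw [t1]; exact mul_ne_zero p1 p9)
    (by rw [t2]; exact mul_ne_zero p2 p8) (by rw [t3]; exact mul_ne_zero p3 p7)
    (by rw [t4]; exact mul_ne_zero p4 p6) (by rw [t5]; exact mul_ne_zero p5 p5) h5 h6 h7
  rw [t1, t2, t3, t4, t5] at key
  rw [e1, e2, d1, d1', d2, d5 5]
  norm_num only
  convert key using 1
  · congr 2 <;> field_simp
  · field_simp
end
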